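/- arXiv:1105.1067 — 3 statements merged into one kernel-verified Lean document; each statement's English description precedes it below -/
import Mathlib

section
/- Let α, β be permutations of {1,...,8} that are 8-cycles (cycle type {8}) and let γ be the identity permutation of {1,...,8}. Then the number of Latin squares of order 8 having Θ = (α,β,γ) as an autotopism is 40320. -/
/-!
The number of Latin squares with autotopism `(α, β, γ)` depends only on the conjugacy classes of
`α`, `β` and `γ`, because renaming rows, columns and symbols conjugates the three permutations.
So the two `n`-cycles may both be taken to be `i ↦ i + 1` on `Fin n`. A square `L` with
`L (i + 1) (j + 1) = L i j` satisfies `L i j = L 0 (j - i)`, hence is determined by its row `0`.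
That row can be any of the `n!` permutations, since `j - i` is a bijective function of `i` and
of `j`.
-/

/-- A Latin square of order `n`: each row and each column is a bijection. -/
def IsLatinSquare {n : ℕ} (L : Fin n → Fin n → Fin n) : Prop :=
  (∀ i, Function.Bijective (L i)) ∧ (∀ j, Function.Bijective fun i => L i j)

/-- `(α, β, γ)` is an autotopism of the Latin square `L`. -/
def IsAutotopism {n : ℕ} (α β γ : Equiv.Perm (Fin n)) (L : Fin n → Fin n → Fin n) : Prop :=
  ∀ i j, L (α i) (β j) = γ (L i j)

/-- The Latin squares of order `n` that have the isotopism `(α, β, γ)` as an autotopism; the number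
of them is written `Δ(α, β, γ)` in the literature. -/
def autotopicLatinSquares {n : ℕ} (α β γ : Equiv.Perm (Fin n)) : Set (Fin n → Fin n → Fin n) :=
  {L | IsLatinSquare L ∧ IsAutotopism α β γ L}

/-- The isotope of `L` under `(σ, τ, ρ)`: rows are renamed by `σ`, columns by `τ` and symbols
by `ρ`. -/
def isotope {n : ℕ} (σ τ ρ : Equiv.Perm (Fin n)) : Equiv.Perm (Fin n → Fin n → Fin n) :=
  σ.arrowCongr (τ.arrowCongr ρ)

section Isotopy

variable {n : ℕ} {α β γ α' β' γ' : Equiv.Perm (Fin n)} {L : Fin n → Fin n → Fin n}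

theorem isotope_apply (σ τ ρ : Equiv.Perm (Fin n)) (i j : Fin n) :
    isotope σ τ ρ L i j = ρ (L (σ.symm i) (τ.symm j)) :=
  rfl

theorem isLatinSquare_isotope_iff (σ τ ρ : Equiv.Perm (Fin n)) :
    IsLatinSquare (isotope σ τ ρ L) ↔ IsLatinSquare L := by
  have rows (i : Fin n) :
      Function.Bijective (isotope σ τ ρ L i) ↔ Function.Bijective (L (σ.symm i)) :=
    (ρ.comp_bijective _).trans (τ.symm.bijective_comp _)
  have columns (j : Fin n) : Function.Bijective (fun i => isotope σ τ ρ L i j) ↔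
      Function.Bijective (fun i => L i (τ.symm j)) :=
    (ρ.comp_bijective _).trans (σ.symm.bijective_comp fun i => L i (τ.symm j))
  exact and_congr (σ.symm.forall_congr rows) (τ.symm.forall_congr columns)

theorem isAutotopism_isotope_iff (σ τ ρ : Equiv.Perm (Fin n)) :
    IsAutotopism (σ * α * σ⁻¹) (τ * β * τ⁻¹) (ρ * γ * ρ⁻¹) (isotope σ τ ρ L) ↔
      IsAutotopism α β γ L := by
  refine (σ.forall_congr fun i => τ.forall_congr fun j => ?_).symm
  simp [isotope_apply]

theorem card_autotopicLatinSquares_congr (hα : IsConj α α') (hβ : IsConj β β')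
    (hγ : IsConj γ γ') :
    Nat.card (autotopicLatinSquares α β γ) = Nat.card (autotopicLatinSquares α' β' γ') := by
  obtain ⟨σ, rfl⟩ := isConj_iff.mp hα
  obtain ⟨τ, rfl⟩ := isConj_iff.mp hβ
  obtain ⟨ρ, rfl⟩ := isConj_iff.mp hγ
  exact Nat.card_congr <| (isotope σ τ ρ).subtypeEquiv fun L =>
    (and_congr (isLatinSquare_isotope_iff σ τ ρ) (isAutotopism_isotope_iff σ τ ρ)).symm

end Isotopy

section Rotation

variable {n : ℕ} [NeZero n]

theorem isAutotopism_finRotate_iff {L : Fin n → Fin n → Fin n} :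
    IsAutotopism (finRotate n) (finRotate n) 1 L ↔ ∀ i j, L i j = L 0 (j - i) := by
  simp only [IsAutotopism, finRotate_apply, Equiv.Perm.one_apply]
  constructor
  · intro hL i j
    have diagonal : Function.Periodic (fun k => L k (j - i + k)) 1 := fun k => by
      simpa only [add_assoc] using hL k (j - i + k)
    have nsmul_one_eq : i.val • (1 : Fin n) = i := by
      open Fin.CommRing in rw [nsmul_one, Fin.cast_val_eq_self]
    simpa only [nsmul_one_eq, sub_add_cancel, add_zero] using diagonal.nsmul_eq i.val
  · intro hL i j
    rw [hL, hL i j, add_sub_add_right_eq_sub]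

theorem isLatinSquare_comp_sub (p : Equiv.Perm (Fin n)) :
    IsLatinSquare fun i j => p (j - i) :=
  ⟨fun i => ((Equiv.subRight i).trans p).bijective,
    fun j => ((Equiv.subLeft j).trans p).bijective⟩

/-- The bijection that sends a square invariant under simultaneous rotation of rows and columns to
its row `0`. -/
noncomputable def autotopicFinRotateEquivPerm :
    autotopicLatinSquares (finRotate n) (finRotate n) 1 ≃ Equiv.Perm (Fin n) where
  toFun L := Equiv.ofBijective (L.1 0) (L.2.1.1 0)
  invFun p := ⟨fun i j => p (j - i), isLatinSquare_comp_sub p,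
    isAutotopism_finRotate_iff.mpr fun i j => by rw [sub_zero]⟩
  left_inv L := Subtype.ext <| funext₂ fun i j => (isAutotopism_finRotate_iff.mp L.2.2 i j).symm
  right_inv p := Equiv.ext fun j => congrArg p (sub_zero j)

theorem card_autotopicLatinSquares_finRotate :
    Nat.card (autotopicLatinSquares (finRotate n) (finRotate n) 1) = n.factorial := by
  rw [Nat.card_congr autotopicFinRotateEquivPerm, Nat.card_perm, Nat.card_fin]

end Rotation

theorem isConj_finRotate_of_cycleType_eq {n : ℕ} {α : Equiv.Perm (Fin n)}
    (hα : α.cycleType = {n}) : IsConj α (finRotate n) := by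
  have two_le : 2 ≤ n := Equiv.Perm.two_le_of_mem_cycleType (hα ▸ Multiset.mem_singleton_self n)
  rw [Equiv.Perm.isConj_iff_cycleType_eq, hα, cycleType_finRotate_of_le two_le]

theorem delta_88_id_general {n : ℕ} (α β : Equiv.Perm (Fin n))
    (hα : α.cycleType = {n}) (hβ : β.cycleType = {n}) :
    Nat.card {L : Fin n → Fin n → Fin n // IsLatinSquare L ∧ IsAutotopism α β 1 L} =
      n.factorial := by
  have : NeZero n := ⟨by rintro rfl; simp [Subsingleton.elim α 1] at hα⟩
  exact (card_autotopicLatinSquares_congr (isConj_finRotate_of_cycleType_eq hα)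
    (isConj_finRotate_of_cycleType_eq hβ) (IsConj.refl 1)).trans
    card_autotopicLatinSquares_finRotate

theorem delta_88_id (α β γ : Equiv.Perm (Fin 8))
    (hα : α.cycleType = {8}) (hβ : β.cycleType = {8}) (hγ : γ = 1) :
    Nat.card {L : Fin 8 → Fin 8 → Fin 8 // IsLatinSquare L ∧ IsAutotopism α β γ L} =
      40320 := by
  subst hγ
  exact delta_88_id_general α β hα hβ
end

section
/- Let α, β be permutations of {1,...,8} that are each a product of four disjoint 2-cycles (cycle type {2,2,2,2}) and let γ be the identity permutation of {1,...,8}. Then the number of Latin squares of order 8 having Θ = (α,β,γ) as an autotopism is 828396011520. -/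
/-!
Number the points of each cycle of `α` and `β` so that both act on `Fin 4 × ZMod 2` as
`(J, z) ↦ (J, z + 1)`. A Latin square with autotopism `(α, β, 1)` is then determined by one row from
each cycle of `α`, and four bijections from the symbols to `Fin 4 × ZMod 2` arise in this way
exactly when no symbol lies in the same cycle of `β` in two of these rows. Relabelling the symbols
by the first row gives a factor `8!`. In each of the other three rows only the cycle of `β` in which
a symbol lies matters, so the order inside the cycles gives a factor `(2!) ^ 4`. What is left is to
place every symbol in three rows such that each cycle receives two symbols per row and the four
cycles met by a symbol are distinct; a search that merges choices of equal occupancy finds 5016 such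
placements.
-/

open Finset Equiv Function
open scoped Nat

section CycleNumbering

theorem apply_pow_eq_add_natCast {X J M : Type*} [AddMonoidWithOne M] {σ : Perm X} {E : X → J × M}
    (hE : ∀ x, E (σ x) = ((E x).1, (E x).2 + 1)) (n : ℕ) (x : X) :
    E ((σ ^ n) x) = ((E x).1, (E x).2 + n) := by
  induction n with
  | zero => simp
  | succ n ih => simp [pow_succ', hE, ih, add_assoc]

variable {X : Type*} [Fintype X] [DecidableEq X] {k p : ℕ} [Fact p.Prime] {σ : Perm X}

theorem cycleType_eq_replicate_of_pow_prime_eq_one (hpow : σ ^ p = 1) (hfix : ∀ x, σ x ≠ x)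
    (hX : Fintype.card X = k * p) : σ.cycleType = Multiset.replicate k p := by
  have hrep := Perm.cycleType_of_pow_prime_eq_one hpow
  have hsupp : σ.support = univ := eq_univ_of_forall fun x => Perm.mem_support.mpr (hfix x)
  have hsum := σ.sum_cycleType
  rw [hrep, Multiset.sum_replicate, smul_eq_mul, hsupp, card_univ, hX] at hsum
  rwa [Nat.eq_of_mul_eq_mul_right (Fact.out : p.Prime).pos hsum] at hrep

theorem exists_equiv_fin_prod_zmod_of_cycleType_eq_replicate
    (hσ : σ.cycleType = Multiset.replicate k p) (hX : Fintype.card X = k * p) :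
    ∃ E : X ≃ Fin k × ZMod p, ∀ x, E (σ x) = ((E x).1, (E x).2 + 1) := by
  obtain ⟨e⟩ : Nonempty (X ≃ Fin k × ZMod p) := Fintype.card_eq.mp (by simp [hX, ZMod.card])
  let τ : Perm X := e.symm.permCongr ((Equiv.refl (Fin k)).prodCongr (Equiv.addRight 1))
  have hτ : ∀ x, e (τ x) = ((e x).1, (e x).2 + 1) := fun x => by simp [τ, Prod.map_def]
  have hpow : τ ^ p = 1 := Perm.ext fun x => e.injective <| by simp [apply_pow_eq_add_natCast hτ]
  have hfix : ∀ x, τ x ≠ x := fun x hx => by simpa [hx, Prod.ext_iff] using hτ x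
  obtain ⟨c, hc⟩ := isConj_iff.mp <| Perm.isConj_iff_cycleType_eq.mpr <|
    hσ.trans (cycleType_eq_replicate_of_pow_prime_eq_one hpow hfix hX).symm
  refine ⟨c.trans e, fun x => ?_⟩
  have hcσ : c (σ x) = τ (c x) := DFunLike.congr_fun (mul_inv_eq_iff_eq_mul.mp hc) x
  simp [hcσ, hτ]

end CycleNumbering

/-- The array of rows `r`, where `r I s` is the column of row `I` holding the symbol `s`, is
semi-Latin if no symbol occurs twice in a column. A column of a row may hold several symbols. -/
def IsSemiLatin {R S C : Type*} (r : R → S → C) : Prop :=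
  ∀ s, Injective fun I => r I s

section SquareOfRows

variable {R C M : Type*} {n : ℕ}

/-- The square invariant under simultaneous translation of the rows and columns, numbered by `E` and
`F`, whose row `(I, 0)` holds the symbol `s` in column `e I s`. -/
def squareOfRows [Sub M] (E : Fin n ≃ R × M) (F : Fin n ≃ C × M) (e : R → Fin n ≃ C × M) :
    Fin n → Fin n → Fin n :=
  fun i j => (e (E i).1).symm ((F j).1, (F j).2 - (E i).2)

theorem squareOfRows_injective [AddGroup M] (E : Fin n ≃ R × M) (F : Fin n ≃ C × M) :
    Injective (squareOfRows E F) := fun e e' h =>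
  funext fun I => symm_bijective.injective <| Equiv.ext fun b => by
    simpa [squareOfRows] using congr_fun₂ h (E.symm (I, 0)) (F.symm b)

theorem isLatinSquare_squareOfRows [AddGroup M] {E : Fin n ≃ R × M} {F : Fin n ≃ C × M}
    {e : R → Fin n ≃ C × M} :
    IsLatinSquare (squareOfRows E F e) ↔ IsSemiLatin fun I s => (e I s).1 := by
  refine ⟨fun h s I I' (hI : (e I s).1 = (e I' s).1) => ?_, fun h => ⟨fun i => ?_, fun j => ?_⟩⟩
  · have hs : ∀ K, (e K s).1 = (e I s).1 →
        squareOfRows E F e (E.symm (K, -(e K s).2)) (F.symm ((e I s).1, 0)) = s := fun K hK => by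
      simp [squareOfRows, ← hK]
    have hrow := (h.2 _).injective ((hs I rfl).trans (hs I' hI.symm).symm)
    exact congr_arg Prod.fst (E.symm.injective hrow)
  · exact Finite.injective_iff_bijective.mp fun j j' hj => by
      simpa [squareOfRows, ← Prod.ext_iff] using hj
  · refine Finite.injective_iff_bijective.mp fun i i'
      (hi : squareOfRows E F e i j = squareOfRows E F e i' j) => ?_
    have hslot : ∀ i, e (E i).1 (squareOfRows E F e i j) = ((F j).1, (F j).2 - (E i).2) :=
      fun i => by simp [squareOfRows]
    have hi' : e (E i').1 (squareOfRows E F e i j) = ((F j).1, (F j).2 - (E i').2) :=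
      hi ▸ hslot i'
    have hrow : (E i).1 = (E i').1 :=
      h (squareOfRows E F e i j) (by simp only [hslot i, hi'])
    have hshift := (hslot i).symm.trans (hrow ▸ hi')
    exact E.injective (Prod.ext hrow (sub_right_injective (congr_arg Prod.snd hshift)))

theorem isAutotopism_squareOfRows [AddCommGroup M] [One M] {α β : Perm (Fin n)} {E : Fin n ≃ R × M}
    {F : Fin n ≃ C × M} (hE : ∀ i, E (α i) = ((E i).1, (E i).2 + 1))
    (hF : ∀ j, F (β j) = ((F j).1, (F j).2 + 1)) (e : R → Fin n ≃ C × M) :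
    IsAutotopism α β 1 (squareOfRows E F e) := fun i j => by
  simp [squareOfRows, hE, hF]

end SquareOfRows

section CountSquares

variable {R C : Type*} {n d : ℕ} [NeZero d] {α β : Perm (Fin n)} {E : Fin n ≃ R × ZMod d}
  {F : Fin n ≃ C × ZMod d}

theorem IsAutotopism.apply_pow_apply_pow {L : Fin n → Fin n → Fin n} (hL : IsAutotopism α β 1 L)
    (m : ℕ) (i j : Fin n) : L ((α ^ m) i) ((β ^ m) j) = L i j := by
  induction m with
  | zero => simp
  | succ m ih => rw [pow_succ', pow_succ']; exact (hL _ _).trans ih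

theorem IsAutotopism.exists_squareOfRows_eq (hE : ∀ i, E (α i) = ((E i).1, (E i).2 + 1))
    (hF : ∀ j, F (β j) = ((F j).1, (F j).2 + 1)) {L : Fin n → Fin n → Fin n}
    (hL : IsAutotopism α β 1 L) (hrow : ∀ i, Bijective (L i)) : ∃ e, squareOfRows E F e = L := by
  refine ⟨fun I => (F.symm.trans (Equiv.ofBijective _ (hrow (E.symm (I, 0))))).symm, ?_⟩
  ext i j : 2
  obtain ⟨m, hm⟩ := ZMod.natCast_zmod_surjective (E i).2
  have hi : (α ^ m) (E.symm ((E i).1, 0)) = i :=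
    E.injective <| by simp [apply_pow_eq_add_natCast hE, hm]
  have hj : (β ^ m) (F.symm ((F j).1, (F j).2 - (E i).2)) = j :=
    F.injective <| by simp [apply_pow_eq_add_natCast hF, hm]
  calc squareOfRows E F _ i j
      = L (E.symm ((E i).1, 0)) (F.symm ((F j).1, (F j).2 - (E i).2)) := rfl
    _ = L i j := by rw [← hL.apply_pow_apply_pow m, hi, hj]

theorem natCard_isLatinSquare_isAutotopism (hE : ∀ i, E (α i) = ((E i).1, (E i).2 + 1))
    (hF : ∀ j, F (β j) = ((F j).1, (F j).2 + 1)) :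
    Nat.card {L : Fin n → Fin n → Fin n // IsLatinSquare L ∧ IsAutotopism α β 1 L} =
      Nat.card {e : R → Fin n ≃ C × ZMod d // IsSemiLatin fun I s => (e I s).1} := by
  refine (Nat.card_eq_of_bijective (fun e => ⟨squareOfRows E F e.1,
    isLatinSquare_squareOfRows.mpr e.2, isAutotopism_squareOfRows hE hF e.1⟩) ⟨?_, ?_⟩).symm
  · exact fun e e' h => Subtype.ext (squareOfRows_injective E F (congr_arg Subtype.val h))
  · rintro ⟨L, hlatin, haut⟩
    obtain ⟨e, rfl⟩ := haut.exists_squareOfRows_eq hE hF hlatin.1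
    exact ⟨⟨e, isLatinSquare_squareOfRows.mp hlatin⟩, rfl⟩

end CountSquares

theorem natCard_equiv_eq_factorial {A B : Type*} [Finite A] (b : A ≃ B) :
    Nat.card (A ≃ B) = (Nat.card A)! :=
  (Nat.card_congr (equivCongr (Equiv.refl A) b.symm)).trans Nat.card_perm

section FirstRow

variable {S B C D : Type*} {m : ℕ}

/-- Relabelling the symbols by the slots they occupy in the first row, which is recorded
separately. -/
def relabelByFirstRow : (Fin (m + 1) → S ≃ B) ≃ (Fin m → Perm B) × (S ≃ B) where
  toFun e := (fun I => (e 0).symm.trans (e I.succ), e 0)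
  invFun x := Fin.cons x.2 fun I => x.2.trans (x.1 I)
  left_inv e := by
    ext I : 1
    cases I using Fin.cases <;> simp [← Equiv.trans_assoc]
  right_inv x := by
    ext I : 2 <;> simp [← Equiv.trans_assoc]

/-- The rows `r`, placed below a first row holding the symbol `(c, z)` in column `c`, form a
semi-Latin array. -/
def IsSemiLatinCompletion (r : Fin m → C × D → C) : Prop :=
  IsSemiLatin (Fin.cons Prod.fst r : Fin (m + 1) → C × D → C)

theorem isSemiLatin_iff_relabelByFirstRow (e : Fin (m + 1) → S ≃ C × D) :
    (IsSemiLatin fun I s => (e I s).1) ↔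
      IsSemiLatinCompletion fun I b => ((relabelByFirstRow e).1 I b).1 := by
  refine (e 0).forall_congr fun {s} => ?_
  congr! 2 with I
  cases I using Fin.cases <;> simp [relabelByFirstRow]

theorem natCard_isSemiLatin_eq_factorial_mul [Finite S] (b : S ≃ C × D) (m : ℕ) :
    Nat.card {e : Fin (m + 1) → S ≃ C × D // IsSemiLatin fun I s => (e I s).1} =
      (Nat.card S)! * Nat.card {e : Fin m → Perm (C × D) //
        IsSemiLatinCompletion fun I b => (e I b).1} := by
  let Q (e : Fin m → Perm (C × D)) : Prop := IsSemiLatinCompletion fun I b => (e I b).1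
  calc _ = Nat.card {x : (Fin m → Perm (C × D)) × (S ≃ C × D) // Q x.1} :=
        Nat.card_congr (relabelByFirstRow.subtypeEquiv isSemiLatin_iff_relabelByFirstRow)
    _ = Nat.card ({e // Q e} × (S ≃ C × D)) := Nat.card_congr prodSubtypeFstEquivSubtypeProd
    _ = _ := by rw [Nat.card_prod, natCard_equiv_eq_factorial b, mul_comm]

end FirstRow

section ForgetSlots

variable {R S C D : Type*}

/-- An equivalence `S ≃ C × D` lying over `r : S → C` is a numbering by `D` of each fibre of `r`. -/
def equivOverEquivPi (r : S → C) :
    {e : S ≃ C × D // ∀ s, (e s).1 = r s} ≃ ∀ J, ({s // r s = J} ≃ D) where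
  toFun e J :=
    { toFun := fun s => (e.1 s).2
      invFun := fun z => ⟨e.1.symm (J, z), by simp [← e.2]⟩
      left_inv := by
        rintro ⟨s, rfl⟩
        simp [← e.2]
      right_inv := fun z => by simp }
  invFun f := ⟨((sigmaFiberEquiv r).symm.trans (sigmaCongrRight f)).trans (sigmaEquivProd C D),
    fun _ => rfl⟩
  left_inv e := by
    ext s : 2
    exact Prod.ext (e.2 s).symm rfl
  right_inv f := by
    ext J ⟨s, rfl⟩
    rfl

theorem natCard_fiber_fst (e : S ≃ C × D) (J : C) : Nat.card {s // (e s).1 = J} = Nat.card D :=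
  Nat.card_congr (equivOverEquivPi (fun s => (e s).1) ⟨e, fun _ => rfl⟩ J)

theorem natCard_equivOver [Finite S] [Finite C] [Finite D] {r : S → C}
    (hr : ∀ J, Nat.card {s // r s = J} = Nat.card D) :
    Nat.card {e : S ≃ C × D // ∀ s, (e s).1 = r s} = (Nat.card D)! ^ Nat.card C := by
  have := Fintype.ofFinite C
  have hJ : ∀ J, Nat.card ({s // r s = J} ≃ D) = (Nat.card D)! := fun J => by
    obtain ⟨b⟩ := Finite.card_eq.mp (hr J)
    rw [natCard_equiv_eq_factorial b, hr]
  simp [Nat.card_congr (equivOverEquivPi r), Nat.card_pi, hJ]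

theorem natCard_pi_equivOver [Finite R] [Finite S] [Finite C] [Finite D] {r : R → S → C}
    (hr : ∀ I J, Nat.card {s // r I s = J} = Nat.card D) :
    Nat.card {e : R → S ≃ C × D // (fun I s => (e I s).1) = r} =
      ((Nat.card D)! ^ Nat.card C) ^ Nat.card R := by
  have := Fintype.ofFinite R
  calc _ = Nat.card (∀ I, {e : S ≃ C × D // ∀ s, (e s).1 = r I s}) :=
        Nat.card_congr <|
          (subtypeEquivRight fun e => by simp only [funext_iff]).trans subtypePiEquivPi
    _ = _ := by simp [Nat.card_pi, natCard_equivOver (hr _)]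

theorem natCard_subtype_comp_eq_mul {A B : Type*} [Finite A] [Finite B] {f : A → B} {q : B → Prop}
    {N : ℕ} (hf : ∀ b, q b → Nat.card {a // f a = b} = N) :
    Nat.card {a // q (f a)} = N * Nat.card {b // q b} := by
  have := Fintype.ofFinite {b // q b}
  rw [← Nat.card_congr (sigmaSubtypeFiberEquivSubtype f fun _ => Iff.rfl), Nat.card_sigma,
    sum_congr rfl fun (b : Subtype q) _ => hf b b.2]
  simp [mul_comm]

theorem natCard_pi_equiv_eq_pow_mul [Finite R] [Finite S] [Finite C] [Finite D]
    (P : (R → S → C) → Prop) :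
    Nat.card {e : R → S ≃ C × D // P fun I s => (e I s).1} =
      ((Nat.card D)! ^ Nat.card C) ^ Nat.card R * Nat.card {r : R → S → C //
        (∀ I J, Nat.card {s // r I s = J} = Nat.card D) ∧ P r} := by
  rw [← natCard_subtype_comp_eq_mul fun r hr => natCard_pi_equivOver hr.1]
  exact Nat.card_congr <| subtypeEquivRight fun e =>
    (and_iff_right fun I J => natCard_fiber_fst (e I) J).symm

end ForgetSlots

section Selection

variable {κ ι : Type*} [Fintype ι]

/-- The number of ways to choose one element from each of the sets `A 0, …, A (n - 1)` with weights
adding up to `T`, by recursion on the number of sets. Choices of equal weight are treated together,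
which is what makes the recursion feasible to evaluate. -/
def selectionCount (w : κ → ι → ℕ) : (n : ℕ) → (Fin n → Finset κ) → (ι → ℕ) → ℕ
  | 0, _, T => if T = 0 then 1 else 0
  | n + 1, A, T => ∑ u ∈ (A 0).image w with ∀ i, u i ≤ T i,
      #{v ∈ A 0 | w v = u} * selectionCount w n (Fin.tail A) (T - u)

/-- Splitting off the choice made from the first set. -/
def selectionConsEquiv (w : κ → ι → ℕ) {n : ℕ} (A : Fin (n + 1) → Finset κ) (T : ι → ℕ) :
    {g : Fin (n + 1) → κ // (∀ c, g c ∈ A c) ∧ ∑ c, w (g c) = T} ≃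
      Σ v : {v ∈ A 0 | ∀ i, w v i ≤ T i},
        {g : Fin n → κ // (∀ c, g c ∈ Fin.tail A c) ∧ ∑ c, w (g c) = T - w v} where
  toFun g :=
    have hT : w (g.1 0) + ∑ c, w (Fin.tail g.1 c) = T := (Fin.sum_univ_succ _).symm.trans g.2.2
    ⟨⟨g.1 0, mem_filter.mpr ⟨g.2.1 0, Pi.le_def.mp (hT.le.trans' le_self_add)⟩⟩,
      Fin.tail g.1, fun c => g.2.1 c.succ, (tsub_eq_of_eq_add_rev hT.symm).symm⟩
  invFun x := ⟨Fin.cons x.1 x.2.1, Fin.cases (mem_filter.mp x.1.2).1 x.2.2.1, by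
    rw [Fin.sum_univ_succ]
    simp [x.2.2.2, add_tsub_cancel_of_le (Pi.le_def.mpr (mem_filter.mp x.1.2).2)]⟩
  left_inv g := Subtype.ext (Fin.cons_self_tail g.1)
  right_inv _ := rfl

theorem natCard_eq_selectionCount [Finite κ] (w : κ → ι → ℕ) :
    ∀ (n : ℕ) (A : Fin n → Finset κ) (T : ι → ℕ),
      Nat.card {g : Fin n → κ // (∀ c, g c ∈ A c) ∧ ∑ c, w (g c) = T} = selectionCount w n A T
  | 0, A, T => by
    by_cases hT : T = 0 <;> simp [selectionCount, hT, eq_comm (a := (0 : ι → ℕ))]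
  | n + 1, A, T => by
    let G (u : ι → ℕ) : ℕ := selectionCount w n (Fin.tail A) (T - u)
    calc _ = ∑ v ∈ A 0 with ∀ i, w v i ≤ T i, G (w v) := by
          rw [Nat.card_congr (selectionConsEquiv w A T), Nat.card_sigma]
          simp only [natCard_eq_selectionCount w n]
          exact sum_coe_sort _ fun v => G (w v)
      _ = ∑ v ∈ A 0, if ∀ i, w v i ≤ T i then G (w v) else 0 := sum_filter _ _
      _ = ∑ u ∈ (A 0).image w, #{v ∈ A 0 | w v = u} • if ∀ i, u i ≤ T i then G u else 0 :=
          sum_comp (fun u => if ∀ i, u i ≤ T i then G u else 0) w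
      _ = _ := by simp [selectionCount, sum_filter, G]

end Selection

section CountCompletions

variable {D : Type*} [Fintype D] {k m : ℕ}

/-- The number of symbols that a placement `v` of `D` many symbols puts in row `x.1` and column
`x.2`. -/
def occupancy (v : D → Fin m → Fin k) (x : Fin m × Fin k) : ℕ :=
  #{z | v z x.1 = x.2}

/-- The placements in `m` further rows of the symbols `(c, z)`, `z : D`, which occupy column `c` of
the first row, such that each symbol meets distinct columns. -/
def admissiblePlacements (D : Type*) [Fintype D] [DecidableEq D] (m : ℕ) (c : Fin k) :
    Finset (D → Fin m → Fin k) :=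
  Fintype.piFinset fun _ => {v | Injective (Fin.cons c v : Fin (m + 1) → Fin k)}

theorem sum_occupancy_eq_const_iff (g : Fin k → D → Fin m → Fin k) (d : ℕ) :
    (∑ c, occupancy (g c) = fun _ => d) ↔
      ∀ I J, Nat.card {s : Fin k × D // g s.1 s.2 I = J} = d := by
  have hsum (I : Fin m) (J : Fin k) :
      (∑ c, occupancy (g c)) (I, J) = Nat.card {s : Fin k × D // g s.1 s.2 I = J} := by
    simp only [occupancy, Finset.sum_apply, card_filter, Nat.card_eq_fintype_card,
      Fintype.card_subtype, Fintype.sum_prod_type]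
  simp only [funext_iff, Prod.forall, hsum]

theorem isSemiLatinCompletion_iff_mem_admissiblePlacements [DecidableEq D]
    (r : Fin m → Fin k × D → Fin k) :
    IsSemiLatinCompletion r ↔
      ∀ c, (fun z I => r I (c, z)) ∈ admissiblePlacements D m c := by
  simp only [admissiblePlacements, Fintype.mem_piFinset, mem_filter_univ]
  refine Prod.forall.trans (forall₂_congr fun c z => ?_)
  congr! with I
  cases I using Fin.cases <;> rfl

theorem natCard_isSemiLatinCompletion [DecidableEq D] (d : ℕ) :
    Nat.card {r : Fin m → Fin k × D → Fin k //
        (∀ I J, Nat.card {s // r I s = J} = d) ∧ IsSemiLatinCompletion r} =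
      selectionCount occupancy k (admissiblePlacements D m) fun _ => d := by
  rw [← natCard_eq_selectionCount]
  refine Nat.card_congr (((piComm _).trans (Equiv.curry _ _ _)).subtypeEquiv fun r => ?_)
  rw [and_comm, sum_occupancy_eq_const_iff, isSemiLatinCompletion_iff_mem_admissiblePlacements]
  rfl

theorem selectionCount_admissiblePlacements_zmod_two :
    selectionCount occupancy 4 (admissiblePlacements (ZMod 2) 3) (fun _ => 2) = 5016 := by
  decide +kernel

end CountCompletions

theorem delta_2222_id (α β γ : Equiv.Perm (Fin 8))
    (hα : α.cycleType = {2, 2, 2, 2}) (hβ : β.cycleType = {2, 2, 2, 2}) (hγ : γ = 1) :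
    Nat.card {L : Fin 8 → Fin 8 → Fin 8 // IsLatinSquare L ∧ IsAutotopism α β γ L} =
      828396011520 := by
  subst hγ
  obtain ⟨E, hE⟩ := exists_equiv_fin_prod_zmod_of_cycleType_eq_replicate (k := 4) (p := 2) hα rfl
  obtain ⟨F, hF⟩ := exists_equiv_fin_prod_zmod_of_cycleType_eq_replicate (k := 4) (p := 2) hβ rfl
  calc Nat.card {L : Fin 8 → Fin 8 → Fin 8 // IsLatinSquare L ∧ IsAutotopism α β 1 L}
      = Nat.card {e : Fin 4 → Fin 8 ≃ Fin 4 × ZMod 2 // IsSemiLatin fun I s => (e I s).1} :=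
        natCard_isLatinSquare_isAutotopism hE hF
    _ = 8! * Nat.card {e : Fin 3 → Perm (Fin 4 × ZMod 2) //
          IsSemiLatinCompletion fun I b => (e I b).1} := by
        rw [natCard_isSemiLatin_eq_factorial_mul F 3, Nat.card_fin]
    _ = 8! * (((2)! ^ 4) ^ 3 * Nat.card {r : Fin 3 → Fin 4 × ZMod 2 → Fin 4 //
          (∀ I J, Nat.card {s // r I s = J} = 2) ∧ IsSemiLatinCompletion r}) := by
        rw [natCard_pi_equiv_eq_pow_mul IsSemiLatinCompletion, Nat.card_zmod, Nat.card_fin,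
          Nat.card_fin]
    _ = 8! * (((2)! ^ 4) ^ 3 * 5016) := by
        rw [natCard_isSemiLatinCompletion, selectionCount_admissiblePlacements_zmod_two]
    _ = 828396011520 := by decide
end

section
/- Let α, β be permutations of {1,...,9} that are each a product of three disjoint 3-cycles (cycle type {3,3,3}) and let γ be the identity permutation of {1,...,9}. Then the number of Latin squares of order 9 having Θ = (α,β,γ) as an autotopism is 948109639680. -/
/-!
Split the rows and the columns into the three `d`-cycles of `α` and `β`.  As `γ = 1`, an autotopic
Latin square is developed cyclically from one base row per row cycle, and the columns are bijective
exactly when, for every symbol `s`, sending a row cycle to the column cycle that holds `s` in its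
base row is a permutation `c s` of three points.  The base rows with a given family `c` are
bijections with prescribed first coordinate: there are `d! ^ 9` of them if every pair of cycles is
matched by exactly `d` of the `c s`, and none otherwise.

An even and an odd permutation of three points agree at exactly one point, so this balance condition
says that all even permutations occur equally often in `c`, say `k` times, and all odd ones `d - k`
times.  There are `(3d)! / (k! (d - k)!) ^ 3` such families; the sum over `k` is a multiple of the
Franel number `∑ k, (d choose k) ^ 3`, which is `56` for `d = 3`.
-/

open Equiv Finset Function
open scoped Nat

section FiberCounting

variable {S K : Type*}

/-- A bijection onto a disjoint union whose first coordinate is prescribed to be `c` amounts to a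
bijection from each fiber of `c` onto the corresponding summand. -/
def equivSigmaOverEquivPi {X : K → Type*} (c : S → K) :
    {e : S ≃ Σ k, X k // ∀ s, (e s).1 = c s} ≃ ∀ k, {s // c s = k} ≃ X k where
  toFun e k := (e.1.subtypeEquiv fun s => by rw [e.2]).trans (sigmaSubtype k)
  invFun ψ := ⟨(sigmaFiberEquiv c).symm.trans (sigmaCongrRight ψ), fun _ => rfl⟩
  left_inv := by
    rintro ⟨e, he⟩
    ext1
    ext1 s
    exact Sigma.ext (he s).symm (eqRec_heq _ _)
  right_inv ψ := by
    ext k ⟨s, rfl⟩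
    rfl

lemma card_equiv_eq_ite (α β : Type*) [Finite α] [Finite β] :
    Nat.card (α ≃ β) = if Nat.card α = Nat.card β then (Nat.card β)! else 0 := by
  split_ifs with h
  · obtain ⟨e⟩ := Finite.card_eq.mp h
    rw [Nat.card_congr (e.equivCongr (.refl β)), Nat.card_perm]
  · exact @Nat.card_of_isEmpty _ ⟨fun e => h (Nat.card_congr e)⟩

open Classical in
lemma card_equiv_sigma_over [Finite S] [Fintype K] {X : K → Type*} [∀ k, Finite (X k)]
    (c : S → K) :
    Nat.card {e : S ≃ Σ k, X k // ∀ s, (e s).1 = c s} =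
      if ∀ k, Nat.card {s // c s = k} = Nat.card (X k) then ∏ k, (Nat.card (X k))! else 0 := by
  rw [Nat.card_congr (equivSigmaOverEquivPi c), Nat.card_pi]
  simp [card_equiv_eq_ite, prod_ite_zero]

open Classical in
lemma card_equiv_prod_over [Finite S] [Fintype K] {G : Type*} [Finite G] (c : S → K) :
    Nat.card {e : S ≃ K × G // ∀ s, (e s).1 = c s} =
      if ∀ k, Nat.card {s // c s = k} = Nat.card G then (Nat.card G)! ^ Nat.card K else 0 := by
  have toSigma : {e : S ≃ K × G // ∀ s, (e s).1 = c s} ≃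
      {e : S ≃ Σ _ : K, G // ∀ s, (e s).1 = c s} :=
    (equivCongr (.refl S) (sigmaEquivProd K G).symm).subtypeEquiv fun _ => Iff.rfl
  simp [Nat.card_congr toSigma, card_equiv_sigma_over]

lemma card_sigma_of_card_eq_ite {ι : Type*} [Finite ι] {F : ι → Type*} [∀ i, Finite (F i)]
    {P : ι → Prop} [DecidablePred P] {N : ℕ} (h : ∀ i, Nat.card (F i) = if P i then N else 0) :
    Nat.card (Σ i, F i) = Nat.card {i // P i} * N := by
  have := Fintype.ofFinite ι
  rw [Nat.card_sigma, Nat.card_eq_fintype_card, Fintype.card_subtype]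
  simp [h, ← sum_filter]

lemma card_prescribed_fibers_mul_prod_factorial [Finite S] [Fintype K] {v : K → ℕ}
    (hv : ∑ k, v k = Nat.card S) :
    Nat.card {c : S → K // ∀ k, Nat.card {s // c s = k} = v k} * ∏ k, (v k)! =
      (Nat.card S)! := by
  classical
  let firstCoord (e : S ≃ Σ k, Fin (v k)) (s : S) : K := (e s).1
  have card_fiber (c : S → K) : Nat.card {e // firstCoord e = c} =
      if ∀ k, Nat.card {s // c s = k} = v k then ∏ k, (v k)! else 0 := by
    simpa [firstCoord, funext_iff] using card_equiv_sigma_over (X := fun k => Fin (v k)) c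
  rw [← card_sigma_of_card_eq_ite card_fiber, Nat.card_congr (sigmaFiberEquiv firstCoord),
    card_equiv_eq_ite, Nat.card_sigma]
  simp [hv]

lemma card_subtype_comp_eq_sum [Finite S] [Fintype K] (c : S → K) (P : K → Prop)
    [DecidablePred P] :
    Nat.card {s // P (c s)} = ∑ k with P k, Nat.card {s // c s = k} := by
  rw [← Nat.card_congr (sigmaSubtypeFiberEquivSubtype c (p := fun s => P (c s)) fun _ => Iff.rfl),
    Nat.card_sigma]
  exact (sum_subtype _ (fun _ => mem_filter_univ _) fun k => Nat.card {s // c s = k}).symm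

lemma card_subtype_exists_mem_eq_sum {T ι : Type*} [Finite T] {I : Finset ι} {P : ι → T → Prop}
    (hP : ∀ t, ∀ i ∈ I, ∀ j ∈ I, P i t → P j t → i = j) :
    Nat.card {t // ∃ i ∈ I, P i t} = ∑ i ∈ I, Nat.card {t // P i t} := by
  classical
  have := Fintype.ofFinite T
  simp only [Nat.card_eq_fintype_card, Fintype.card_subtype]
  rw [← card_biUnion fun i hi j hj ne => disjoint_filter.mpr fun t _ hit hjt =>
    ne (hP t i hi j hj hit hjt)]
  congr 1
  ext t
  simp

end FiberCounting

section CycleCoordinates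

variable {X : Type*} [Fintype X] [DecidableEq X] {α : Perm X} {k d : ℕ}

lemma zpow_apply_eq_zpow_apply_iff_of_cycleType (hα : α.cycleType = Multiset.replicate k d)
    (hX : Nat.card X = k * d) (x : X) (i j : ℤ) :
    (α ^ i) x = (α ^ j) x ↔ (i : ZMod d) = j := by
  have support_eq : α.support = univ := by
    rw [← card_eq_iff_eq_univ, ← Perm.sum_cycleType, hα, Multiset.sum_replicate, smul_eq_mul,
      ← hX, Nat.card_eq_fintype_card]
  have mem_support : x ∈ α.support := support_eq ▸ mem_univ x
  have card_cycle : #(α.cycleOf x).support = d := by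
    refine Multiset.eq_of_mem_replicate (n := k) ?_
    rw [← hα, Perm.cycleType_def]
    exact Multiset.mem_map_of_mem _ (Perm.cycleOf_mem_cycleFactorsFinset_iff.mpr mem_support)
  rw [ZMod.intCast_eq_intCast_iff, ← card_cycle]
  exact (Perm.isCycleOn_support_cycleOf α x).zpow_apply_eq_zpow_apply
    (Perm.mem_support_cycleOf_iff.mpr ⟨.refl α x, mem_support⟩)

lemma exists_cycle_coordinates [NeZero d] (hα : α.cycleType = Multiset.replicate k d)
    (hX : Nat.card X = k * d) :
    ∃ e : Fin k × ZMod d ≃ X, ∀ a x, α (e (a, x)) = e (a, x + 1) := by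
  have zpow_eq := zpow_apply_eq_zpow_apply_iff_of_cycleType hα hX
  let Cycles := Quotient (Perm.SameCycle.setoid α)
  let point (p : Cycles × ZMod d) : X := (α ^ (p.2.cast : ℤ)) p.1.out
  have point_injective : Injective point := by
    rintro ⟨q, x⟩ ⟨q', x'⟩ (h : (α ^ (x.cast : ℤ)) q.out = (α ^ (x'.cast : ℤ)) q'.out)
    have same_cycle : α.SameCycle q.out q'.out := by
      rw [← Perm.sameCycle_zpow_left (n := x.cast), h, Perm.sameCycle_zpow_left]
    obtain rfl : q = q' := Quotient.out_equiv_out.mp same_cycle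
    simpa using (zpow_eq _ _ _).mp h
  have point_surjective : Surjective point := fun y => by
    obtain ⟨i, hi⟩ : α.SameCycle (⟦y⟧ : Cycles).out y :=
      Quotient.mk_out (s := Perm.SameCycle.setoid α) y
    refine ⟨(⟦y⟧, i), .trans ?_ hi⟩
    simp [point, zpow_eq]
  let pointEquiv := Equiv.ofBijective point ⟨point_injective, point_surjective⟩
  have card_cycles : Nat.card (Fin k) = Nat.card Cycles := by
    have card_point := Nat.card_congr pointEquiv
    rw [Nat.card_prod, Nat.card_zmod, hX] at card_point
    simpa using (Nat.eq_of_mul_eq_mul_right (NeZero.pos d) card_point).symm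
  obtain ⟨cycleEquiv⟩ := Finite.card_eq.mp card_cycles
  refine ⟨(prodCongr cycleEquiv (.refl _)).trans pointEquiv, fun a x => ?_⟩
  change α ((α ^ (x.cast : ℤ)) (cycleEquiv a).out) =
    (α ^ ((x + 1).cast : ℤ)) (cycleEquiv a).out
  rw [← Perm.mul_apply, ← zpow_one_add, zpow_eq]
  simp [add_comm]

end CycleCoordinates

section CyclicDevelopment

variable {A B : Type*} {n d : ℕ}

/-- The array obtained by developing base rows cyclically.  In coordinates `e` on the rows and `f`
on the columns, `g a s = (b, z)` says that symbol `s` stands in column `(b, z)` of the base row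
`(a, 0)`; it then stands in column `(b, x + z)` of the row `(a, x)`. -/
def develop (e : A × ZMod d ≃ Fin n) (f : B × ZMod d ≃ Fin n) (g : A → (Fin n ≃ B × ZMod d)) :
    Fin n → Fin n → Fin n :=
  fun i j => (g (e.symm i).1).symm ((f.symm j).1, (f.symm j).2 - (e.symm i).2)

variable {e : A × ZMod d ≃ Fin n} {f : B × ZMod d ≃ Fin n} {g : A → (Fin n ≃ B × ZMod d)}
  {α β : Perm (Fin n)} {L : Fin n → Fin n → Fin n}

lemma develop_apply (a : A) (x : ZMod d) (b : B) (y : ZMod d) :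
    develop e f g (e (a, x)) (f (b, y)) = (g a).symm (b, y - x) := by
  simp [develop]

lemma develop_injective : Injective (develop e f) := by
  intro g g' h
  funext a
  rw [← symm_symm (g a), ← symm_symm (g' a)]
  congr 1
  ext1 ⟨b, y⟩
  simpa [develop_apply] using congrFun₂ h (e (a, 0)) (f (b, y))

lemma isAutotopism_develop (he : ∀ a x, α (e (a, x)) = e (a, x + 1))
    (hf : ∀ b y, β (f (b, y)) = f (b, y + 1)) : IsAutotopism α β 1 (develop e f g) := by
  refine e.forall_congr_right.mp fun ⟨a, x⟩ => f.forall_congr_right.mp fun ⟨b, y⟩ => ?_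
  simp [he, hf, develop_apply]

lemma IsAutotopism.apply_eq_apply_base_row [NeZero d] (hL : IsAutotopism α β 1 L)
    (he : ∀ a x, α (e (a, x)) = e (a, x + 1)) (hf : ∀ b y, β (f (b, y)) = f (b, y + 1))
    (a : A) (x : ZMod d) (b : B) (y : ZMod d) :
    L (e (a, x)) (f (b, y)) = L (e (a, 0)) (f (b, y - x)) := by
  obtain ⟨m, rfl⟩ := ZMod.natCast_zmod_surjective x
  induction m generalizing y with
  | zero => simp
  | succ m ih =>
    calc L (e (a, (m + 1 : ℕ))) (f (b, y)) = L (α (e (a, m))) (β (f (b, y - 1))) := by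
          simp [he, hf]
      _ = L (e (a, m)) (f (b, y - 1)) := hL _ _
      _ = L (e (a, 0)) (f (b, y - (m + 1 : ℕ))) := by
          rw [ih]; push_cast; congr 3; ring

lemma exists_develop_eq [NeZero d] (hrow : ∀ i, Bijective (L i)) (hL : IsAutotopism α β 1 L)
    (he : ∀ a x, α (e (a, x)) = e (a, x + 1)) (hf : ∀ b y, β (f (b, y)) = f (b, y + 1)) :
    ∃ g, develop e f g = L := by
  refine ⟨fun a => (f.trans (.ofBijective _ (hrow (e (a, 0))))).symm, ?_⟩
  funext i j
  obtain ⟨⟨a, x⟩, rfl⟩ := e.surjective i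
  obtain ⟨⟨b, y⟩, rfl⟩ := f.surjective j
  simp [develop_apply, hL.apply_eq_apply_base_row he hf a x]

lemma existsUnique_develop_apply_eq_iff (b : B) (y : ZMod d) (s : Fin n) :
    (∃! i, develop e f g i (f (b, y)) = s) ↔ ∃! a, (g a s).1 = b := by
  have develop_eq_iff (a : A) (x : ZMod d) :
      develop e f g (e (a, x)) (f (b, y)) = s ↔ (g a s).1 = b ∧ x = y - (g a s).2 := by
    rw [develop_apply, symm_apply_eq, Prod.mk.injEq, eq_comm (b := (g a s).1), sub_eq_iff_eq_add,
      eq_sub_iff_add_eq, add_comm, eq_comm (a := y)]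
  constructor
  · rintro ⟨i, hi, unique⟩
    obtain ⟨⟨a, x⟩, rfl⟩ := e.surjective i
    refine ⟨a, ((develop_eq_iff a x).mp hi).1, fun a' ha' => ?_⟩
    have := unique (e (a', _)) ((develop_eq_iff a' _).mpr ⟨ha', rfl⟩)
    exact congrArg Prod.fst (e.injective this)
  · rintro ⟨a, ha, unique⟩
    refine ⟨e (a, _), (develop_eq_iff a _).mpr ⟨ha, rfl⟩,
      e.forall_congr_right.mp fun ⟨a', x'⟩ h => ?_⟩
    obtain ⟨ha', rfl⟩ := (develop_eq_iff a' x').mp h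
    rw [unique a' ha']

lemma isLatinSquare_develop_iff :
    IsLatinSquare (develop e f g) ↔ ∀ s, Bijective fun a => (g a s).1 := by
  have row_bijective (i : Fin n) : Bijective (develop e f g i) :=
    (f.symm.trans
      ((prodCongr (.refl B) (.subRight (e.symm i).2)).trans (g (e.symm i).1).symm)).bijective
  simp only [IsLatinSquare, row_bijective, implies_true, true_and, bijective_iff_existsUnique]
  constructor
  · exact fun h s b => (existsUnique_develop_apply_eq_iff b 0 s).mp (h _ s)
  · exact fun h => f.forall_congr_right.mp fun ⟨b, y⟩ s =>
      (existsUnique_develop_apply_eq_iff b y s).mpr (h s b)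

lemma card_autotopic_latinSquare_eq_card_develop [NeZero d]
    (he : ∀ a x, α (e (a, x)) = e (a, x + 1)) (hf : ∀ b y, β (f (b, y)) = f (b, y + 1)) :
    Nat.card {L : Fin n → Fin n → Fin n // IsLatinSquare L ∧ IsAutotopism α β 1 L} =
      Nat.card {g : A → (Fin n ≃ B × ZMod d) // ∀ s, Bijective fun a => (g a s).1} := by
  symm
  refine Nat.card_congr (.ofBijective (fun g => ⟨develop e f g.1,
    isLatinSquare_develop_iff.mpr g.2, isAutotopism_develop he hf⟩) ⟨fun g g' h => ?_, ?_⟩)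
  · exact Subtype.ext (develop_injective (congrArg Subtype.val h))
  · rintro ⟨L, latin, autotopic⟩
    obtain ⟨g, rfl⟩ := exists_develop_eq latin.1 autotopic he hf
    exact ⟨⟨g, isLatinSquare_develop_iff.mp latin⟩, rfl⟩

end CyclicDevelopment

section BalancedFamilies

/-- A family of bijections `c s : A ≃ B` is `d`-balanced if every pair `(a, b)` is matched by
exactly `d` of them, that is, if the matrices of the `c s` sum to `d` times the all-ones matrix. -/
def IsBalanced {S A B : Type*} (d : ℕ) (c : S → (A ≃ B)) : Prop :=
  ∀ a b, Nat.card {s // c s a = b} = d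

/-- Regroups a family `g` by the family of bijections formed by its first coordinates. -/
noncomputable def firstCoordinateEquiv {S A B G : Type*} :
    {g : A → (S ≃ B × G) // ∀ s, Bijective fun a => (g a s).1} ≃
      Σ c : S → (A ≃ B), ∀ a, {e : S ≃ B × G // ∀ s, (e s).1 = c s a} where
  toFun g := ⟨fun s => .ofBijective _ (g.2 s), fun a => ⟨g.1 a, fun _ => rfl⟩⟩
  invFun p := ⟨fun a => (p.2 a).1, fun s => by simpa only [(p.2 _).2] using (p.1 s).bijective⟩
  left_inv _ := rfl
  right_inv := by
    rintro ⟨c, g⟩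
    obtain ⟨⟨g, hg⟩, rfl⟩ :=
      (subtypePiEquivPi (p := fun a (e : S ≃ B × G) => ∀ s, (e s).1 = c s a)).surjective g
    have first_bijective (s : S) : Bijective fun a => (g a s).1 := by
      simpa only [hg] using (c s).bijective
    obtain rfl : c = fun s => .ofBijective _ (first_bijective s) := by
      ext s a
      exact (hg a s).symm
    rfl

lemma card_bijective_first_coordinate {S A B G : Type*} [Finite S] [Finite A] [Finite B]
    [Finite G] :
    Nat.card {g : A → (S ≃ B × G) // ∀ s, Bijective fun a => (g a s).1} =
      Nat.card {c : S → (A ≃ B) // IsBalanced (Nat.card G) c} *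
        (Nat.card G)! ^ (Nat.card A * Nat.card B) := by
  classical
  have := Fintype.ofFinite A
  have := Fintype.ofFinite B
  rw [Nat.card_congr firstCoordinateEquiv]
  refine card_sigma_of_card_eq_ite fun c => ?_
  rw [Nat.card_pi]
  simp only [card_equiv_prod_over, prod_ite_zero, IsBalanced]
  simp [← pow_mul, mul_comm]

end BalancedFamilies

section ThreePoints

variable {d k : ℕ}

lemma exists_even_odd_filter_apply_eq : ∀ a b : Fin 3, ∃ σ τ : Perm (Fin 3),
    Perm.sign σ = 1 ∧ Perm.sign τ = -1 ∧ ({ρ | ρ a = b} : Finset (Perm (Fin 3))) = {σ, τ} := by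
  decide

lemma exists_filter_apply_eq_of_sign : ∀ σ τ : Perm (Fin 3), Perm.sign σ = 1 → Perm.sign τ = -1 →
    ∃ a b : Fin 3, ({ρ | ρ a = b} : Finset (Perm (Fin 3))) = {σ, τ} := by
  decide

lemma sum_filter_apply_eq_iff_even_add_odd (v : Perm (Fin 3) → ℕ) :
    (∀ a b, ∑ ρ with ρ a = b, v ρ = d) ↔
      ∀ σ τ, Perm.sign σ = 1 → Perm.sign τ = -1 → v σ + v τ = d := by
  have sum_even_odd {σ τ : Perm (Fin 3)} (hσ : Perm.sign σ = 1) (hτ : Perm.sign τ = -1) :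
      ∑ ρ ∈ {σ, τ}, v ρ = v σ + v τ :=
    sum_pair fun h => by simp [h, hτ] at hσ
  constructor
  · intro h σ τ hσ hτ
    obtain ⟨a, b, hab⟩ := exists_filter_apply_eq_of_sign σ τ hσ hτ
    rw [← sum_even_odd hσ hτ, ← hab, h]
  · intro h a b
    obtain ⟨σ, τ, hσ, hτ, hab⟩ := exists_even_odd_filter_apply_eq a b
    rw [hab, sum_even_odd hσ hτ, h σ τ hσ hτ]

/-- The multiplicities of the permutations of three points in a `d`-balanced family containing the
identity `k` times: even permutations occur `k` times and odd ones `d - k` times. -/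
def parityMultiplicity (d k : ℕ) (σ : Perm (Fin 3)) : ℕ :=
  if Perm.sign σ = 1 then k else d - k

lemma even_add_odd_iff_exists_parityMultiplicity (v : Perm (Fin 3) → ℕ) :
    (∀ σ τ, Perm.sign σ = 1 → Perm.sign τ = -1 → v σ + v τ = d) ↔
      ∃ k ∈ range (d + 1), ∀ σ, v σ = parityMultiplicity d k σ := by
  constructor
  · intro h
    have odd_swap : Perm.sign (swap (0 : Fin 3) 1) = -1 := Perm.sign_swap (by decide)
    have one_add_swap := h 1 (swap 0 1) Perm.sign_one odd_swap
    refine ⟨v 1, mem_range.mpr (by lia), fun σ => ?_⟩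
    rcases Int.units_eq_one_or (Perm.sign σ) with even | odd
    · have := h σ (swap 0 1) even odd_swap
      rw [parityMultiplicity, if_pos even]
      lia
    · have := h 1 σ Perm.sign_one odd
      rw [parityMultiplicity, if_neg (by simp [odd])]
      lia
  · rintro ⟨k, hk, hv⟩ σ τ hσ hτ
    have := mem_range_succ_iff.mp hk
    simp [hv, parityMultiplicity, hσ, hτ, this]

lemma card_even_perm_fin_three : #{σ : Perm (Fin 3) | Perm.sign σ = 1} = 3 := by decide

lemma card_not_even_perm_fin_three : #{σ : Perm (Fin 3) | ¬ Perm.sign σ = 1} = 3 := by decide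

lemma sum_parityMultiplicity (hk : k ≤ d) : ∑ σ, parityMultiplicity d k σ = 3 * d := by
  simp only [parityMultiplicity, sum_ite, sum_const, card_even_perm_fin_three,
    card_not_even_perm_fin_three, smul_eq_mul]
  lia

lemma prod_factorial_parityMultiplicity (d k : ℕ) :
    ∏ σ, (parityMultiplicity d k σ)! = (k ! * (d - k)!) ^ 3 := by
  simp only [parityMultiplicity, apply_ite Nat.factorial, prod_ite, prod_const,
    card_even_perm_fin_three, card_not_even_perm_fin_three, mul_pow]

variable {S : Type*} [Finite S]

lemma isBalanced_iff_exists_parityMultiplicity (c : S → Perm (Fin 3)) :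
    IsBalanced d c ↔
      ∃ k ∈ range (d + 1), ∀ σ, Nat.card {s // c s = σ} = parityMultiplicity d k σ := by
  rw [← even_add_odd_iff_exists_parityMultiplicity, ← sum_filter_apply_eq_iff_even_add_odd]
  exact forall₂_congr fun a b => by rw [← card_subtype_comp_eq_sum c fun σ => σ a = b]

lemma card_parityMultiplicity_mul_factorial_pow (hS : Nat.card S = 3 * d) (hk : k ≤ d) :
    Nat.card {c : S → Perm (Fin 3) //
        ∀ σ, Nat.card {s // c s = σ} = parityMultiplicity d k σ} * d ! ^ 3 =
      (3 * d)! * d.choose k ^ 3 := by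
  have multinomial := card_prescribed_fibers_mul_prod_factorial
    ((sum_parityMultiplicity hk).trans hS.symm)
  rw [prod_factorial_parityMultiplicity, hS] at multinomial
  rw [← multinomial, ← Nat.choose_mul_factorial_mul_factorial hk]
  ring

lemma card_isBalanced_perm_fin_three_mul_factorial_pow (hS : Nat.card S = 3 * d) :
    Nat.card {c : S → Perm (Fin 3) // IsBalanced d c} * d ! ^ 3 =
      (3 * d)! * ∑ k ∈ range (d + 1), d.choose k ^ 3 := by
  have card_eq_sum : Nat.card {c : S → Perm (Fin 3) // IsBalanced d c} =
      ∑ k ∈ range (d + 1), Nat.card {c : S → Perm (Fin 3) //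
        ∀ σ, Nat.card {s // c s = σ} = parityMultiplicity d k σ} := by
    simp only [isBalanced_iff_exists_parityMultiplicity]
    refine card_subtype_exists_mem_eq_sum fun c k _ l _ hk hl => ?_
    simpa [parityMultiplicity] using (hk 1).symm.trans (hl 1)
  rw [card_eq_sum, sum_mul, mul_sum]
  exact sum_congr rfl fun k hk =>
    card_parityMultiplicity_mul_factorial_pow hS (mem_range_succ_iff.mp hk)

end ThreePoints

theorem delta_333333_id_general {n d : ℕ} (hn : n = 3 * d) (α β : Perm (Fin n))
    (hα : α.cycleType = Multiset.replicate 3 d) (hβ : β.cycleType = Multiset.replicate 3 d) :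
    Nat.card {L : Fin n → Fin n → Fin n // IsLatinSquare L ∧ IsAutotopism α β 1 L} =
      (3 * d)! * d ! ^ 6 * ∑ k ∈ range (d + 1), d.choose k ^ 3 := by
  have : NeZero d := ⟨by
    have := Perm.two_le_of_mem_cycleType (σ := α) (n := d) (by simp [hα])
    lia⟩
  have card_fin : Nat.card (Fin n) = 3 * d := by rw [Nat.card_fin, hn]
  obtain ⟨e, he⟩ := exists_cycle_coordinates hα card_fin
  obtain ⟨f, hf⟩ := exists_cycle_coordinates hβ card_fin
  rw [card_autotopic_latinSquare_eq_card_develop he hf, card_bijective_first_coordinate,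
    Nat.card_zmod, Nat.card_fin]
  calc Nat.card {c : Fin n → Perm (Fin 3) // IsBalanced d c} * d ! ^ (3 * 3)
      = Nat.card {c : Fin n → Perm (Fin 3) // IsBalanced d c} * d ! ^ 3 * d ! ^ 6 := by ring
    _ = (3 * d)! * d ! ^ 6 * ∑ k ∈ range (d + 1), d.choose k ^ 3 := by
      rw [card_isBalanced_perm_fin_three_mul_factorial_pow card_fin]; ring

theorem delta_333333_id (α β γ : Equiv.Perm (Fin 9))
    (hα : α.cycleType = {3, 3, 3}) (hβ : β.cycleType = {3, 3, 3}) (hγ : γ = 1) :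
    Nat.card {L : Fin 9 → Fin 9 → Fin 9 // IsLatinSquare L ∧ IsAutotopism α β γ L} =
      948109639680 := by
  rw [hγ, delta_333333_id_general (d := 3) rfl α β hα hβ]
  rfl
end
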